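/- The distribution parameter of the C-ruled surface satisfies P(s) = τ(s)/(f(s)² + g(s)²) for all s ∈ ℝ; consequently P(s) = 0 for all s if and only if τ(s) = 0 for all s (the C-ruled surface is developable if and only if α is a planar curve). -/

import Mathlib

open RealInnerProductSpace

/-- Cross product on `EuclideanSpace ℝ (Fin 3)`. -/
noncomputable def cross3 (u v : EuclideanSpace ℝ (Fin 3)) : EuclideanSpace ℝ (Fin 3) :=
  (EuclideanSpace.equiv (Fin 3) ℝ).symm
    (crossProduct ((EuclideanSpace.equiv (Fin 3) ℝ) u) ((EuclideanSpace.equiv (Fin 3) ℝ) v))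

/-- Determinant of the 3×3 matrix whose rows are the given vectors. -/
noncomputable def det3 (u v w : EuclideanSpace ℝ (Fin 3)) : ℝ :=
  Matrix.det (Matrix.of ![(EuclideanSpace.equiv (Fin 3) ℝ) u,
    (EuclideanSpace.equiv (Fin 3) ℝ) v, (EuclideanSpace.equiv (Fin 3) ℝ) w])

section CrossProduct

variable (u v w : EuclideanSpace ℝ (Fin 3))

theorem cross3_apply_zero : cross3 u v 0 = u 1 * v 2 - u 2 * v 1 := by
  simp [cross3, cross_apply]

theorem cross3_apply_one : cross3 u v 1 = u 2 * v 0 - u 0 * v 2 := by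
  simp [cross3, cross_apply]

theorem cross3_apply_two : cross3 u v 2 = u 0 * v 1 - u 1 * v 0 := by
  simp [cross3, cross_apply]

theorem inner_eq_sum_three : ⟪u, v⟫ = u 0 * v 0 + u 1 * v 1 + u 2 * v 2 := by
  simp [PiLp.inner_apply, Fin.sum_univ_three, mul_comm]

theorem inner_self_cross3 : ⟪u, cross3 u v⟫ = 0 := by
  simp only [inner_eq_sum_three, cross3_apply_zero, cross3_apply_one, cross3_apply_two]
  ring

theorem inner_right_cross3 : ⟪v, cross3 u v⟫ = 0 := by
  simp only [inner_eq_sum_three, cross3_apply_zero, cross3_apply_one, cross3_apply_two]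
  ring

/-- Lagrange's identity. -/
theorem inner_cross3_self :
    ⟪cross3 u v, cross3 u v⟫ = ⟪u, u⟫ * ⟪v, v⟫ - ⟪u, v⟫ ^ 2 := by
  simp only [inner_eq_sum_three, cross3_apply_zero, cross3_apply_one, cross3_apply_two]
  ring

theorem cross3_self_cross3 : cross3 u (cross3 u v) = ⟪u, v⟫ • u - ⟪u, u⟫ • v := by
  ext i
  fin_cases i <;>
    simp [inner_eq_sum_three, cross3_apply_zero, cross3_apply_one, cross3_apply_two,
      -inner_self_eq_norm_sq_to_K] <;> ring

theorem cross3_self : cross3 u u = 0 := by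
  simp [cross3]

theorem cross3_smul_left (a : ℝ) : cross3 (a • u) v = a • cross3 u v := by
  simp [cross3]

theorem cross3_smul_right (a : ℝ) : cross3 u (a • v) = a • cross3 u v := by
  simp [cross3]

theorem cross3_add_right : cross3 u (v + w) = cross3 u v + cross3 u w := by
  simp [cross3]

theorem det3_frame (p q a m b : ℝ) :
    det3 u (p • u + q • cross3 u v) (a • u + m • v + b • cross3 u v) =
      -(q * m) * ⟪cross3 u v, cross3 u v⟫ := by
  simp [det3, Matrix.det_fin_three, inner_eq_sum_three, cross3_apply_zero, cross3_apply_one,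
    cross3_apply_two, -inner_self_eq_norm_sq_to_K]
  ring

variable {u v}

theorem orthonormal_cross3 (hu : ‖u‖ = 1) (hv : ‖v‖ = 1) (huv : ⟪u, v⟫ = 0) :
    Orthonormal ℝ ![u, v, cross3 u v] := by
  have hcross : ‖cross3 u v‖ = 1 := by
    have h := inner_cross3_self u v
    simp only [real_inner_self_eq_norm_sq, hu, hv, huv] at h
    exact (pow_eq_one_iff_of_nonneg (norm_nonneg _) two_ne_zero).1 (by linarith)
  have hvu : ⟪v, u⟫ = 0 := (real_inner_comm _ _).trans huv
  have hcross_u : ⟪cross3 u v, u⟫ = 0 := (real_inner_comm _ _).trans (inner_self_cross3 u v)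
  have hcross_v : ⟪cross3 u v, v⟫ = 0 := (real_inner_comm _ _).trans (inner_right_cross3 u v)
  rw [orthonormal_iff_ite]
  intro i j
  fin_cases i <;> fin_cases j <;>
    simp [hu, hv, hcross, huv, hvu, hcross_u, hcross_v, inner_self_cross3, inner_right_cross3]

theorem eq_inner_smul_cross3_frame (hu : ‖u‖ = 1) (hv : ‖v‖ = 1) (huv : ⟪u, v⟫ = 0) :
    w = ⟪u, w⟫ • u + ⟪v, w⟫ • v + ⟪cross3 u v, w⟫ • cross3 u v := by
  have ho := orthonormal_cross3 hu hv huv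
  let b := (basisOfOrthonormalOfCardEqFinrank ho (by simp)).toOrthonormalBasis (by simpa using ho)
  have h := b.sum_repr' w
  simpa [b, Fin.sum_univ_three] using h.symm

theorem norm_sq_cross3_frame (hu : ‖u‖ = 1) (hv : ‖v‖ = 1) (huv : ⟪u, v⟫ = 0) (a m b : ℝ) :
    ‖a • u + m • v + b • cross3 u v‖ ^ 2 = a ^ 2 + m ^ 2 + b ^ 2 := by
  have h := (orthonormal_cross3 hu hv huv).inner_sum ![a, m, b] ![a, m, b] Finset.univ
  simp only [Fin.sum_univ_three] at h
  rw [← real_inner_self_eq_norm_sq]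
  simpa [sq] using h

end CrossProduct

theorem HasDerivAt.cross3 {u v : ℝ → EuclideanSpace ℝ (Fin 3)} {u' v' : EuclideanSpace ℝ (Fin 3)}
    {s : ℝ} (hu : HasDerivAt u u' s) (hv : HasDerivAt v v' s) :
    HasDerivAt (fun t => _root_.cross3 (u t) (v t))
      (_root_.cross3 u' (v s) + _root_.cross3 (u s) v') s := by
  have hu_i (i) : HasDerivAt (fun t => u t i) (u' i) s :=
    hasDerivAt_pi.1 ((EuclideanSpace.equiv (Fin 3) ℝ).hasFDerivAt.comp_hasDerivAt s hu) i
  have hv_i (i) : HasDerivAt (fun t => v t i) (v' i) s :=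
    hasDerivAt_pi.1 ((EuclideanSpace.equiv (Fin 3) ℝ).hasFDerivAt.comp_hasDerivAt s hv) i
  rw [hasDerivAt_iff_hasFDerivAt, ← hasFDerivWithinAt_univ, hasFDerivWithinAt_euclidean]
  intro i
  rw [hasFDerivWithinAt_univ]
  suffices h : HasDerivAt (fun t => _root_.cross3 (u t) (v t) i)
      ((_root_.cross3 u' (v s) + _root_.cross3 (u s) v') i) s by
    refine h.hasFDerivAt.congr_fderiv ?_
    ext
    simp
  fin_cases i
  · simp only [Fin.zero_eta, PiLp.add_apply, cross3_apply_zero]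
    exact (((hu_i 1).mul (hv_i 2)).sub ((hu_i 2).mul (hv_i 1))).congr_deriv (by ring)
  · simp only [Fin.mk_one, PiLp.add_apply, cross3_apply_one]
    exact (((hu_i 2).mul (hv_i 0)).sub ((hu_i 0).mul (hv_i 2))).congr_deriv (by ring)
  · simp only [Fin.reduceFinMk, PiLp.add_apply, cross3_apply_two]
    exact (((hu_i 0).mul (hv_i 1)).sub ((hu_i 1).mul (hv_i 0))).congr_deriv (by ring)

theorem inner_deriv_eq_zero_of_norm_eq_one {u : ℝ → EuclideanSpace ℝ (Fin 3)}
    {u' : EuclideanSpace ℝ (Fin 3)} {s : ℝ} (hnorm : ∀ t, ‖u t‖ = 1) (hu : HasDerivAt u u' s) :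
    ⟪u s, u'⟫ = 0 := by
  have h := hu.inner ℝ hu
  have hconst : (fun t => ⟪u t, u t⟫) = fun _ => (1 : ℝ) := by
    funext t
    simp [hnorm]
  rw [hconst] at h
  have h0 := h.unique (hasDerivAt_const s (1 : ℝ))
  rw [real_inner_comm (u s) u'] at h0
  linarith

theorem hasDerivAt_div_sqrt_sq_add_sq {x y : ℝ → ℝ} {x' y' s : ℝ} (hx : HasDerivAt x x' s)
    (hy : HasDerivAt y y' s) (hpos : 0 < x s ^ 2 + y s ^ 2) :
    HasDerivAt (fun t => x t / √(x t ^ 2 + y t ^ 2))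
      (y s * (x' * y s - x s * y') / √(x s ^ 2 + y s ^ 2) ^ 3) s := by
  have hr : √(x s ^ 2 + y s ^ 2) ^ 2 = x s ^ 2 + y s ^ 2 := Real.sq_sqrt hpos.le
  have hr0 : √(x s ^ 2 + y s ^ 2) ≠ 0 := (Real.sqrt_pos.2 hpos).ne'
  refine (hx.div (((hx.pow 2).add (hy.pow 2)).sqrt hpos.ne') hr0).congr_deriv ?_
  simp only [Pi.add_apply, Pi.pow_apply] at *
  field_simp
  rw [hr]
  push_cast
  ring

theorem stmt_6
    (α : ℝ → EuclideanSpace ℝ (Fin 3))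
    (hα : ContDiff ℝ (⊤ : ℕ∞) α)
    (hunit : ∀ s, ‖deriv α s‖ = 1)
    (T : ℝ → EuclideanSpace ℝ (Fin 3)) (hT : ∀ s, T s = deriv α s)
    (κ : ℝ → ℝ) (hκ : ∀ s, κ s = ‖deriv (deriv α) s‖) (hκpos : ∀ s, 0 < κ s)
    (N : ℝ → EuclideanSpace ℝ (Fin 3)) (hN : ∀ s, N s = (κ s)⁻¹ • deriv (deriv α) s)
    (B : ℝ → EuclideanSpace ℝ (Fin 3)) (hB : ∀ s, B s = cross3 (T s) (N s))
    (τ : ℝ → ℝ) (hτ : ∀ s, τ s = ⟪deriv N s, B s⟫)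
    (f : ℝ → ℝ) (hf : ∀ s, f s = Real.sqrt (κ s ^ 2 + τ s ^ 2))
    (g : ℝ → ℝ) (hg : ∀ s, g s = κ s ^ 2 / (κ s ^ 2 + τ s ^ 2) * deriv (fun u => τ u / κ u) s)
    (C : ℝ → EuclideanSpace ℝ (Fin 3))
    (hC : ∀ s, C s = (Real.sqrt (κ s ^ 2 + τ s ^ 2))⁻¹ • ((-κ s) • T s + τ s • B s))
    (W : ℝ → EuclideanSpace ℝ (Fin 3))
    (hW : ∀ s, W s = (Real.sqrt (κ s ^ 2 + τ s ^ 2))⁻¹ • (τ s • T s + κ s • B s)) :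
    (∀ s : ℝ,
      det3 (T s) (C s) (deriv C s) / ‖deriv C s‖ ^ 2 = τ s / (f s ^ 2 + g s ^ 2)) ∧
    ((∀ s : ℝ, det3 (T s) (C s) (deriv C s) / ‖deriv C s‖ ^ 2 = 0) ↔ (∀ s : ℝ, τ s = 0)) := by
  have hT' : T = deriv α := funext hT
  have hTsmooth : ContDiff ℝ (⊤ : ℕ∞) T := hT' ▸ (contDiff_infty_iff_deriv.1 hα).2
  have hdTsmooth : ContDiff ℝ (⊤ : ℕ∞) (deriv T) := (contDiff_infty_iff_deriv.1 hTsmooth).2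
  rw [← hT'] at hunit hκ hN
  have hdT0 (s) : deriv T s ≠ 0 := norm_pos_iff.1 (hκ s ▸ hκpos s)
  have hκsmooth : ContDiff ℝ (⊤ : ℕ∞) κ := by
    rw [funext hκ]
    exact hdTsmooth.norm ℝ hdT0
  have hNsmooth : ContDiff ℝ (⊤ : ℕ∞) N := by
    rw [funext hN]
    exact (hκsmooth.inv fun s => (hκpos s).ne').smul hdTsmooth
  have hdNsmooth : ContDiff ℝ (⊤ : ℕ∞) (deriv N) := (contDiff_infty_iff_deriv.1 hNsmooth).2
  have hNunit (s) : ‖N s‖ = 1 := by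
    rw [hN, norm_smul, norm_inv, Real.norm_of_nonneg (hκpos s).le, ← hκ,
      inv_mul_cancel₀ (hκpos s).ne']
  have hTderiv (s) : HasDerivAt T (κ s • N s) s := by
    have h := (hTsmooth.differentiable (by simp) s).hasDerivAt
    rwa [hN, smul_inv_smul₀ (hκpos s).ne']
  have hNdiff (s) : HasDerivAt N (deriv N s) s :=
    (hNsmooth.differentiable (by simp) s).hasDerivAt
  have hTN (s) : ⟪T s, N s⟫ = 0 := by
    have h := inner_deriv_eq_zero_of_norm_eq_one hunit (hTderiv s)
    rw [real_inner_smul_right] at h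
    exact (mul_eq_zero.1 h).resolve_left (hκpos s).ne'
  have hTdN (s) : ⟪T s, deriv N s⟫ = -κ s := by
    have h := (hTderiv s).inner ℝ (hNdiff s)
    rw [funext hTN] at h
    have h0 := h.unique (hasDerivAt_const s (0 : ℝ))
    rw [real_inner_smul_left, real_inner_self_eq_norm_sq, hNunit] at h0
    linarith
  have hNderiv (s) : deriv N s = (-κ s) • T s + τ s • B s := by
    have h := eq_inner_smul_cross3_frame (deriv N s) (hunit s) (hNunit s) (hTN s)
    rw [← hB, hTdN, inner_deriv_eq_zero_of_norm_eq_one hNunit (hNdiff s),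
      real_inner_comm (deriv N s) (B s), ← hτ, zero_smul, add_zero] at h
    exact h
  have hBderiv (s) : HasDerivAt B ((-τ s) • N s) s := by
    rw [funext hB]
    refine ((hTderiv s).cross3 (hNdiff s)).congr_deriv ?_
    rw [hNderiv, hB, cross3_smul_left, cross3_self, cross3_add_right, cross3_smul_right,
      cross3_smul_right, cross3_self, cross3_self_cross3, hTN, real_inner_self_eq_norm_sq, hunit]
    simp
  have hτderiv (s) : HasDerivAt τ (deriv τ s) s := by
    refine DifferentiableAt.hasDerivAt ?_
    rw [funext hτ]
    exact (hdNsmooth.differentiable (by simp) s).inner ℝ (hBderiv s).differentiableAt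
  have hκderiv (s) : HasDerivAt κ (deriv κ s) s :=
    (hκsmooth.differentiable (by simp) s).hasDerivAt
  have hsum (s) : 0 < κ s ^ 2 + τ s ^ 2 := by
    have := hκpos s
    positivity
  have hfpos (s) : 0 < f s := hf s ▸ Real.sqrt_pos.2 (hsum s)
  have hfsq (s) : f s ^ 2 = κ s ^ 2 + τ s ^ 2 := by rw [hf, Real.sq_sqrt (hsum s).le]
  have hCeq (s) : C s = (-(κ s / f s)) • T s + (τ s / f s) • B s := by
    rw [hC, ← hf, smul_add, smul_smul, smul_smul]
    congr 2 <;> ring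
  have hgeq (s) : g s = (deriv τ s * κ s - τ s * deriv κ s) / f s ^ 2 := by
    have := (hκpos s).ne'
    have := (hsum s).ne'
    rw [hg, hfsq, ((hτderiv s).fun_div (hκderiv s) (hκpos s).ne').deriv]
    field_simp
  have hCderiv (s) : deriv C s =
      (τ s * g s / f s) • T s + (-f s) • N s + (κ s * g s / f s) • cross3 (T s) (N s) := by
    have hp : HasDerivAt (fun t => κ t / f t) (-(τ s * g s / f s)) s := by
      have h := hasDerivAt_div_sqrt_sq_add_sq (hκderiv s) (hτderiv s) (hsum s)
      simp only [← hf] at h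
      refine h.congr_deriv ?_
      have := (hfpos s).ne'
      rw [hgeq]
      field_simp
      ring
    have hq : HasDerivAt (fun t => τ t / f t) (κ s * g s / f s) s := by
      have h := hasDerivAt_div_sqrt_sq_add_sq (hτderiv s) (hκderiv s) (by linarith [hsum s])
      simp only [add_comm (τ _ ^ 2), ← hf] at h
      refine h.congr_deriv ?_
      have := (hfpos s).ne'
      rw [hgeq]
      field_simp
    have hm : -f s = -(κ s / f s) * κ s + τ s / f s * -τ s := by
      have := (hfpos s).ne'
      field_simp
      linarith [hfsq s]
    rw [funext hCeq, ((hp.fun_neg.fun_smul (hTderiv s)).fun_add (hq.fun_smul (hBderiv s))).deriv,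
      hm, ← hB]
    module
  have hmain (s) : det3 (T s) (C s) (deriv C s) / ‖deriv C s‖ ^ 2 =
      τ s / (f s ^ 2 + g s ^ 2) := by
    have hf0 := (hfpos s).ne'
    rw [hCderiv, norm_sq_cross3_frame (hunit s) (hNunit s) (hTN s), hCeq, hB, det3_frame,
      inner_cross3_self, hTN, real_inner_self_eq_norm_sq, real_inner_self_eq_norm_sq, hunit,
      hNunit]
    congr 1
    · field_simp
      ring
    · field_simp
      linear_combination (-g s ^ 2) * hfsq s
  refine ⟨hmain, forall_congr' fun s => ?_⟩
  have hden : f s ^ 2 + g s ^ 2 ≠ 0 := by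
    have := hfpos s
    positivity
  rw [hmain, div_eq_zero_iff, or_iff_left hden]
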